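/- arXiv:1802.05501 — 2 statements merged into one kernel-verified Lean document; each statement's English description precedes it below -/
import Mathlib

section
/- Let k be a positive integer, let G be a finite simple graph, let P = (X_1,…,X_l) be a path decomposition of G in which every bag has size at most k, and let S ⊆ V(G) be a bottleneck, i.e., the number of S-branches is at least 2k+1. Then at least one S-branch is an in-branch with respect to P. -/
/-!
Every `s ∈ S` occupies an interval `[p s, q s]` of bags. Put `A = max p s` and `B = min q s` over
`s ∈ S`, so that `S ⊆ X t` as soon as `A ≤ t ≤ B`. A branch `C` has every `s ∈ S` as a neighbour, so
it shares a bag with the vertex attaining `A` and with the one attaining `B`; hence `A ≤ b(C)` and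
`a(C) ≤ B`. If `C` is not an in-branch, then `a(C) < A` or `B < b(C)`. Since the bags meeting a
connected set form an interval (`meets_of_between`), `C` meets `X A` in the first case and `X B` in
the second. Distinct branches are disjoint, so a bag meets at most `k` of them
(`ncard_branch_meeting_le`), and at most `2k` branches fail to be in-branches.
-/

open SimpleGraph

variable {V : Type*}

/-- `N_G(Y)`: the set of vertices outside `Y` having a neighbor in `Y`. -/
def nbhdSet (G : SimpleGraph V) (Y : Set V) : Set V :=
  {v | v ∉ Y ∧ ∃ u ∈ Y, G.Adj u v}

/-- `C` is a connected component of the subgraph of `G` induced by `U`. -/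
def IsCompIn (G : SimpleGraph V) (U C : Set V) : Prop :=
  C.Nonempty ∧ C ⊆ U ∧ (G.induce C).Connected ∧
    ∀ u ∈ C, ∀ v ∈ U, G.Adj u v → v ∈ C

/-- `C` is a connected component of `G - S`. -/
def IsCompOf (G : SimpleGraph V) (S C : Set V) : Prop :=
  IsCompIn G Sᶜ C

/-- `C` is an `S`-branch: a connected component of `G - S` with `N_G(C) = S`. -/
def IsBranch (G : SimpleGraph V) (S C : Set V) : Prop :=
  IsCompOf G S C ∧ nbhdSet G C = S

/-- `S` is a bottleneck (for the width parameter `k`): a nonempty set with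
at least `2k+1` `S`-branches. -/
def IsBottleneck (G : SimpleGraph V) (k : ℕ) (S : Set V) : Prop :=
  S.Nonempty ∧ 2 * k + 1 ≤ {C : Set V | IsBranch G S C}.ncard

/-- `(X 0, …, X (l-1))` is a path decomposition of `G`. -/
def IsPathDecomp (G : SimpleGraph V) (l : ℕ) (X : ℕ → Set V) : Prop :=
  (∀ v, ∃ i < l, v ∈ X i) ∧
  (∀ u v, G.Adj u v → ∃ i < l, u ∈ X i ∧ v ∈ X i) ∧
  (∀ i j m, i ≤ j → j ≤ m → m < l → X i ∩ X m ⊆ X j)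

/-- The width of a path decomposition: the maximum bag size minus one. -/
noncomputable def pdWidth (l : ℕ) (X : ℕ → Set V) : ℕ :=
  ((Finset.range l).sup fun i => (X i).ncard) - 1

/-- The set of indices of bags meeting the vertex set `C`. -/
def supp (l : ℕ) (X : ℕ → Set V) (C : Set V) : Set ℕ :=
  {t | t < l ∧ (C ∩ X t).Nonempty}

/-- `a(C)`: the first index of a bag meeting `C`. -/
noncomputable def firstIdx (l : ℕ) (X : ℕ → Set V) (C : Set V) : ℕ :=
  sInf (supp l X C)

/-- `b(C)`: the last index of a bag meeting `C`. -/
noncomputable def lastIdx (l : ℕ) (X : ℕ → Set V) (C : Set V) : ℕ :=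
  sSup (supp l X C)

/-- `C` is an in-branch of `S` with respect to the decomposition:
an `S`-branch with `S ⊆ X (a C)` and `S ⊆ X (b C)`. -/
def IsInBranch (G : SimpleGraph V) (l : ℕ) (X : ℕ → Set V) (S C : Set V) : Prop :=
  IsBranch G S C ∧ S ⊆ X (firstIdx l X C) ∧ S ⊆ X (lastIdx l X C)

/-- `α(S)`: the minimum of `a(H)` over in-branches `H` of `S`. -/
noncomputable def botStart (G : SimpleGraph V) (l : ℕ) (X : ℕ → Set V) (S : Set V) : ℕ :=
  sInf {i | ∃ C, IsInBranch G l X S C ∧ i = firstIdx l X C}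

/-- `β(S)`: the maximum of `b(H)` over in-branches `H` of `S`. -/
noncomputable def botEnd (G : SimpleGraph V) (l : ℕ) (X : ℕ → Set V) (S : Set V) : ℕ :=
  sSup {i | ∃ C, IsInBranch G l X S C ∧ i = lastIdx l X C}

/-- The interval `I(S,P) = [α(S), β(S)]` of a bottleneck `S`. -/
noncomputable def botInterval (G : SimpleGraph V) (l : ℕ) (X : ℕ → Set V) (S : Set V) : Set ℕ :=
  Set.Icc (botStart G l X S) (botEnd G l X S)

/-- A pre-branch of `S`. -/
def IsPreBranch (G : SimpleGraph V) (l : ℕ) (X : ℕ → Set V) (S C : Set V) : Prop :=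
  IsBranch G S C ∧ ¬ IsInBranch G l X S C ∧ firstIdx l X C < botStart G l X S

/-- A post-branch of `S`. -/
def IsPostBranch (G : SimpleGraph V) (l : ℕ) (X : ℕ → Set V) (S C : Set V) : Prop :=
  IsBranch G S C ∧ ¬ IsInBranch G l X S C ∧
    botStart G l X S ≤ firstIdx l X C ∧ botEnd G l X S < lastIdx l X C

/-- `C` waits in the interval `[i, j]` of the decomposition. -/
def WaitsIn (X : ℕ → Set V) (C : Set V) (i j : ℕ) : Prop :=
  ∀ t, i ≤ t → t ≤ j → C ∩ X t = C ∩ X i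

/-- The decomposition is `S`-structured: every component of `G - S` that is not an
`S`-branch, and every pre- or post-branch of `S`, waits in `I(S,P)`. -/
def IsStructured (G : SimpleGraph V) (l : ℕ) (X : ℕ → Set V) (S : Set V) : Prop :=
  ∀ C : Set V,
    ((IsCompOf G S C ∧ ¬ IsBranch G S C) ∨ IsPreBranch G l X S C ∨ IsPostBranch G l X S C) →
    WaitsIn X C (botStart G l X S) (botEnd G l X S)

/-- The decomposition is `I`-connected: every connected component of the subgraph
induced by any prefix of bags contains a vertex of `I`. -/
def IsIConn (G : SimpleGraph V) (l : ℕ) (X : ℕ → Set V) (I : Set V) : Prop :=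
  ∀ i < l, ∀ C : Set V, IsCompIn G {v | ∃ j ≤ i, v ∈ X j} C → (C ∩ I).Nonempty

/-- A set `D` that meets a connected set `C` and is closed under adjacency inside `C` contains
`C`. -/
lemma subset_of_adj_closed {G : SimpleGraph V} {C D : Set V} (hC : (G.induce C).Connected)
    {v : V} (hvC : v ∈ C) (hvD : v ∈ D)
    (hD : ∀ x ∈ C, x ∈ D → ∀ y ∈ C, G.Adj x y → y ∈ D) : C ⊆ D := by
  intro w hw
  obtain ⟨p⟩ := hC.preconnected ⟨v, hvC⟩ ⟨w, hw⟩
  have key : ∀ (x y : C), (G.induce C).Walk x y → (x : V) ∈ D → (y : V) ∈ D := by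
    intro x y p
    induction p with
    | nil => exact id
    | cons h _ ih => exact fun hx => ih (hD _ (Subtype.prop _) hx _ (Subtype.prop _) h)
  exact key _ _ p hvD

lemma meets_of_between {G : SimpleGraph V} {l : ℕ} {X : ℕ → Set V} (hP : IsPathDecomp G l X)
    {C : Set V} (hC : (G.induce C).Connected) {i j m : ℕ} (hij : i ≤ j) (hjm : j ≤ m)
    (hi : i ∈ supp l X C) (hm : m ∈ supp l X C) : (C ∩ X j).Nonempty := by
  by_contra hne
  have hno : ∀ x ∈ C, x ∉ X j := fun x hx hxj => hne ⟨x, hx, hxj⟩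
  obtain ⟨_, u, huC, hui⟩ := hi
  obtain ⟨hml, w, hwC, hwm⟩ := hm
  -- If `C` misses `X j`, no edge of `C` leaves the set of vertices occurring before bag `j`.
  have hsub : C ⊆ {v | ∃ t ≤ j, v ∈ X t} := by
    refine subset_of_adj_closed hC huC ⟨i, hij, hui⟩ ?_
    rintro x hx ⟨t, htj, hxt⟩ y hy hxy
    obtain ⟨r, hr, hxr, hyr⟩ := hP.2.1 x y hxy
    rcases le_total r j with h | h
    · exact ⟨r, h, hyr⟩
    · exact absurd (hP.2.2 t j r htj h hr ⟨hxt, hxr⟩) (hno x hx)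
  obtain ⟨t, htj, hwt⟩ := hsub hwC
  exact hno w hwC (hP.2.2 t j m htj hjm hml ⟨hwt, hwm⟩)

lemma branch_eq_of_mem {G : SimpleGraph V} {S C D : Set V} (hC : IsBranch G S C)
    (hD : IsBranch G S D) {v : V} (hvC : v ∈ C) (hvD : v ∈ D) : C = D := by
  obtain ⟨⟨_, hCS, hCc, hCcl⟩, _⟩ := hC
  obtain ⟨⟨_, hDS, hDc, hDcl⟩, _⟩ := hD
  exact Set.Subset.antisymm
    (subset_of_adj_closed hCc hvC hvD fun x _ hxD y hy h => hDcl x hxD y (hCS hy) h)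
    (subset_of_adj_closed hDc hvD hvC fun x _ hxC y hy h => hCcl x hxC y (hDS hy) h)

/-- Choosing a vertex of the bag in each branch meeting it is injective, because distinct branches
are disjoint. -/
lemma ncard_branch_meeting_le [Fintype V] (G : SimpleGraph V) (S Y : Set V) :
    {C : Set V | IsBranch G S C ∧ (C ∩ Y).Nonempty}.ncard ≤ Y.ncard := by
  classical
  obtain ⟨f, hf⟩ : ∃ f : Set V → Set V, ∀ C, (C ∩ Y).Nonempty → ∃ v ∈ C ∩ Y, f C = {v} :=
    ⟨fun C => if h : (C ∩ Y).Nonempty then {h.some} else ∅,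
      fun C h => ⟨h.some, h.some_mem, by simp [h]⟩⟩
  rw [← Set.ncard_image_of_injective Y (Set.singleton_injective)]
  refine Set.ncard_le_ncard_of_injOn f ?_ ?_ (Set.toFinite _)
  · rintro C ⟨_, hC⟩
    obtain ⟨v, hv, e⟩ := hf C hC
    exact ⟨v, hv.2, e.symm⟩
  · rintro C ⟨hCb, hC⟩ D ⟨hDb, hD⟩ hCD
    obtain ⟨v, hv, e⟩ := hf C hC
    obtain ⟨w, hw, e'⟩ := hf D hD
    have hvw : v = w := Set.singleton_injective (by rw [← e, ← e', hCD])
    exact branch_eq_of_mem hCb hDb hv.1 (hvw ▸ hw.1)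

lemma bddAbove_supp (l : ℕ) (X : ℕ → Set V) (C : Set V) : BddAbove (supp l X C) :=
  ⟨l, fun _ ht => ht.1.le⟩

lemma firstIdx_le {l : ℕ} {X : ℕ → Set V} {C : Set V} {t : ℕ} (ht : t ∈ supp l X C) :
    firstIdx l X C ≤ t := Nat.sInf_le ht

lemma le_lastIdx {l : ℕ} {X : ℕ → Set V} {C : Set V} {t : ℕ} (ht : t ∈ supp l X C) :
    t ≤ lastIdx l X C := le_csSup (bddAbove_supp l X C) ht

lemma supp_nonempty {G : SimpleGraph V} {l : ℕ} {X : ℕ → Set V} (hP : IsPathDecomp G l X)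
    {C : Set V} (hC : C.Nonempty) : (supp l X C).Nonempty := by
  obtain ⟨v, hv⟩ := hC
  obtain ⟨i, hi, hvi⟩ := hP.1 v
  exact ⟨i, hi, v, hv, hvi⟩

lemma firstIdx_mem {G : SimpleGraph V} {l : ℕ} {X : ℕ → Set V} (hP : IsPathDecomp G l X)
    {C : Set V} (hC : C.Nonempty) : firstIdx l X C ∈ supp l X C :=
  Nat.sInf_mem (supp_nonempty hP hC)

lemma lastIdx_mem {G : SimpleGraph V} {l : ℕ} {X : ℕ → Set V} (hP : IsPathDecomp G l X)
    {C : Set V} (hC : C.Nonempty) : lastIdx l X C ∈ supp l X C :=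
  Nat.sSup_mem (supp_nonempty hP hC) (bddAbove_supp l X C)

/-- A branch shares a bag with every vertex of `S`. -/
lemma exists_common_bag {G : SimpleGraph V} {l : ℕ} {X : ℕ → Set V} (hP : IsPathDecomp G l X)
    {S C : Set V} (hC : IsBranch G S C) {s : V} (hs : s ∈ S) :
    ∃ t, t ∈ supp l X C ∧ t ∈ supp l X {s} := by
  rw [← hC.2] at hs
  obtain ⟨_, u, hu, hus⟩ := hs
  obtain ⟨t, ht, hut, hst⟩ := hP.2.1 u s hus
  exact ⟨t, ⟨ht, u, hu, hut⟩, ht, s, rfl, hst⟩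

/-- for a path decomposition with bags of size at most `k` and a
bottleneck `S`, at least one `S`-branch is an in-branch. -/
theorem stmt2 [Fintype V] (k : ℕ) (hk : 1 ≤ k) (G : SimpleGraph V) (l : ℕ)
    (X : ℕ → Set V) (hP : IsPathDecomp G l X) (hw : ∀ i < l, (X i).ncard ≤ k)
    (S : Set V) (hS : IsBottleneck G k S) :
    ∃ C : Set V, IsInBranch G l X S C := by
  obtain ⟨hSne, hcard⟩ := hS
  obtain ⟨s, hs, hsmax⟩ :=
    Set.exists_max_image S (fun v => firstIdx l X {v}) (Set.toFinite S) hSne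
  obtain ⟨r, hr, hrmin⟩ :=
    Set.exists_min_image S (fun v => lastIdx l X {v}) (Set.toFinite S) hSne
  set A := firstIdx l X {s} with hA
  set B := lastIdx l X {r} with hB
  have hAl : A < l := (firstIdx_mem hP (Set.singleton_nonempty s)).1
  have hBl : B < l := (lastIdx_mem hP (Set.singleton_nonempty r)).1
  have hSX : ∀ t, A ≤ t → t ≤ B → S ⊆ X t := by
    intro t hAt htB v hv
    obtain ⟨_, x, hx, hx1⟩ := firstIdx_mem hP (Set.singleton_nonempty v)
    obtain ⟨hl, y, hy, hy1⟩ := lastIdx_mem hP (Set.singleton_nonempty v)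
    rw [Set.mem_singleton_iff] at hx hy
    subst hx hy
    exact hP.2.2 _ t _ ((hsmax _ hv).trans hAt) (htB.trans (hrmin _ hv)) hl ⟨hx1, hy1⟩
  by_contra hno
  have hcover : {C : Set V | IsBranch G S C} ⊆
      {C | IsBranch G S C ∧ (C ∩ X A).Nonempty} ∪ {C | IsBranch G S C ∧ (C ∩ X B).Nonempty} := by
    intro C (hC : IsBranch G S C)
    have ha := firstIdx_mem hP hC.1.1
    have hb := lastIdx_mem hP hC.1.1
    have hab : firstIdx l X C ≤ lastIdx l X C := firstIdx_le hb
    have hAb : A ≤ lastIdx l X C := by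
      obtain ⟨t, ht, hts⟩ := exists_common_bag hP hC hs
      exact (firstIdx_le hts).trans (le_lastIdx ht)
    have haB : firstIdx l X C ≤ B := by
      obtain ⟨t, ht, htr⟩ := exists_common_bag hP hC hr
      exact (firstIdx_le ht).trans (le_lastIdx htr)
    rcases lt_or_ge (firstIdx l X C) A with h | h
    · exact Or.inl ⟨hC, meets_of_between hP hC.1.2.2.1 h.le hAb ha hb⟩
    rcases lt_or_ge B (lastIdx l X C) with h' | h'
    · exact Or.inr ⟨hC, meets_of_between hP hC.1.2.2.1 haB h'.le ha hb⟩
    exact absurd ⟨C, hC, hSX _ h haB, hSX _ hAb h'⟩ hno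
  have h1 := Set.ncard_le_ncard hcover (Set.toFinite _)
  have h2 := Set.ncard_union_le {C | IsBranch G S C ∧ (C ∩ X A).Nonempty}
    {C | IsBranch G S C ∧ (C ∩ X B).Nonempty}
  have h3 := (ncard_branch_meeting_le G S (X A)).trans (hw A hAl)
  have h4 := (ncard_branch_meeting_le G S (X B)).trans (hw B hBl)
  omega
end

section
/- Let k be a positive integer, let G be a finite simple graph admitting a path decomposition in which every bag has size at most k, and let S ⊆ V(G) be a bottleneck, i.e., the number of S-branches is at least 2k+1. Then |S| ≤ k. -/
/-!
Let `t` be the least index such that some `s ∈ S` occurs in no bag after `X t`. By minimality,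
every vertex of `S` occurs in a bag with index at least `t`. If `S ⊆ X t`, then `|S| ≤ k`.
Otherwise some `v ∈ S` occurs only in bags after `X t`. Every `S`-branch contains a neighbor of
`s` and a neighbor of `v`, hence meets a bag with index at most `t` and a bag with index at
least `t`; being connected, it meets `X t` (`bag_meets_of_connected`). Distinct branches are
disjoint (`IsCompIn.eq_of_mem`), so `X t` has at least `2k+1` vertices, which is impossible.
-/

open SimpleGraph

variable {V : Type*}

/-- A property that propagates along the edges inside a connected set `C` and holds at one vertex
of `C` holds on all of `C`. -/
theorem forall_mem_of_connected {G : SimpleGraph V} {C : Set V} (hC : (G.induce C).Connected)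
    {P : V → Prop} (hP : ∀ x ∈ C, ∀ y ∈ C, G.Adj x y → P x → P y)
    {x y : V} (hx : x ∈ C) (hy : y ∈ C) (hPx : P x) : P y := by
  obtain ⟨w⟩ := hC.preconnected ⟨x, hx⟩ ⟨y, hy⟩
  have key : ∀ a b : C, (G.induce C).Walk a b → P a → P b := by
    intro a b w
    induction w with
    | nil => exact id
    | cons h _ ih => exact fun ha => ih (hP _ (Subtype.prop _) _ (Subtype.prop _) h ha)
  exact key _ _ w hPx

theorem IsCompIn.eq_of_mem {G : SimpleGraph V} {U C D : Set V} (hC : IsCompIn G U C)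
    (hD : IsCompIn G U D) {x : V} (hxC : x ∈ C) (hxD : x ∈ D) : C = D := by
  apply Set.Subset.antisymm
  · intro y hy
    exact forall_mem_of_connected (P := (· ∈ D)) hC.2.2.1
      (fun a _ b hb hab haD => hD.2.2.2 a haD b (hC.2.1 hb) hab) hxC hy hxD
  · intro y hy
    exact forall_mem_of_connected (P := (· ∈ C)) hD.2.2.1
      (fun a _ b hb hab haC => hC.2.2.2 a haC b (hD.2.1 hb) hab) hxD hy hxC

/-- A connected set with vertices in bags on both sides of `X t` meets `X t`: otherwise the
vertices of `C` occurring before `t` would be closed under adjacency in `C`. -/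
theorem bag_meets_of_connected {G : SimpleGraph V} {l : ℕ} {X : ℕ → Set V}
    (hX : IsPathDecomp G l X) {C : Set V} (hC : (G.induce C).Connected) {i j t : ℕ} {x y : V}
    (hx : x ∈ C) (hy : y ∈ C) (hxi : x ∈ X i) (hyj : y ∈ X j) (hit : i ≤ t) (htj : t ≤ j)
    (hj : j < l) : ∃ z ∈ C, z ∈ X t := by
  by_contra! hno
  obtain ⟨i', hi', hyi'⟩ : ∃ m ≤ t, y ∈ X m := by
    refine forall_mem_of_connected (P := fun z => ∃ m ≤ t, z ∈ X m) hC ?_ hx hy ⟨i, hit, hxi⟩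
    rintro a ha b - hab ⟨m, hmt, ham⟩
    obtain ⟨n, hn, han, hbn⟩ := hX.2.1 a b hab
    refine ⟨n, ?_, hbn⟩
    by_contra! htn
    exact hno a ha (hX.2.2 m t n hmt htn.le hn ⟨ham, han⟩)
  exact hno y hy (hX.2.2 i' t j hi' htj hj ⟨hyi', hyj⟩)

/-- if `G` admits a path decomposition with bags of size at most `k`
and `S` is a bottleneck, then `|S| ≤ k`. -/
theorem stmt4 [Fintype V] (k : ℕ) (hk : 1 ≤ k) (G : SimpleGraph V)
    (hdec : ∃ (l : ℕ) (X : ℕ → Set V),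
      IsPathDecomp G l X ∧ ∀ i < l, (X i).ncard ≤ k)
    (S : Set V) (hS : IsBottleneck G k S) :
    S.ncard ≤ k := by
  classical
  obtain ⟨l, X, hX, hcard⟩ := hdec
  obtain ⟨⟨s₀, hs₀⟩, hbr⟩ := hS
  have hex : ∃ t, ∃ s ∈ S, ∀ i < l, s ∈ X i → i ≤ t := ⟨l, s₀, hs₀, fun i hi _ => hi.le⟩
  obtain ⟨t, ⟨s, hs, hst⟩, hmin⟩ :
      ∃ t, (∃ s ∈ S, ∀ i < l, s ∈ X i → i ≤ t) ∧
        ∀ m < t, ¬ ∃ s ∈ S, ∀ i < l, s ∈ X i → i ≤ m :=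
    ⟨Nat.find hex, Nat.find_spec hex, fun _ hm => Nat.find_min hex hm⟩
  have hlate : ∀ v ∈ S, ∃ j < l, t ≤ j ∧ v ∈ X j := by
    intro v hv
    by_contra! hno
    obtain ⟨i, hi, hvi⟩ := hX.1 v
    have hit : i < t := by
      by_contra! h
      exact hno i hi h hvi
    refine hmin (t - 1) (by omega) ⟨v, hv, fun m hm hvm => ?_⟩
    by_contra! h
    exact hno m hm (by omega) hvm
  have htl : t < l := by
    obtain ⟨j, hj, htj, -⟩ := hlate s hs
    omega
  by_cases hsub : S ⊆ X t
  · exact (Set.ncard_le_ncard hsub).trans (hcard t htl)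
  obtain ⟨v, hv, hvt⟩ := Set.not_subset.mp hsub
  have hmeet : ∀ C : Set V, IsBranch G S C → ∃ z ∈ C, z ∈ X t := by
    intro C hC
    obtain ⟨-, x, hxC, hxs⟩ : s ∈ nbhdSet G C := hC.2 ▸ hs
    obtain ⟨-, y, hyC, hyv⟩ : v ∈ nbhdSet G C := hC.2 ▸ hv
    obtain ⟨i, hi, hxi, hsi⟩ := hX.2.1 x s hxs
    obtain ⟨j, hj, hyj, hvj⟩ := hX.2.1 y v hyv
    refine bag_meets_of_connected hX hC.1.2.2.1 hxC hyC hxi hyj (hst i hi hsi) ?_ hj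
    by_contra! hjt
    obtain ⟨m, hm, htm, hvm⟩ := hlate v hv
    exact hvt (hX.2.2 j t m hjt.le htm hm ⟨hvj, hvm⟩)
  have : Nonempty V := ⟨s⟩
  choose! f hfC hfX using hmeet
  have hle : {C : Set V | IsBranch G S C}.ncard ≤ (X t).ncard := by
    refine Set.ncard_le_ncard_of_injOn f (fun C hC => hfX C hC) ?_
    intro C hC D hD hCD
    exact IsCompIn.eq_of_mem hC.1 hD.1 (hfC C hC) (hCD ▸ hfC D hD)
  have := hcard t htl
  omega
end
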